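/- Let f=(h₀,h₁,h₂;q₀,q₁,q₂) be an admissible 6-tuple with q₀≠0, and let f′=(h₀′,h₁′,h₂′;q₀′,q₁′,q₂′) be defined by: if 0<q₀<h₀ and q₀<h₂, then (h₀′,h₁′,h₂′)=(h₀+h₁−q₀, q₀, h₂+h₁−q₀) and (q₀′,q₁′,q₂′)=(h₀+h₁+h₂−2q₀, q₀+q₁+h₁, q₀+q₂+h₁); if q₀>h₀ and q₀>h₂, then (h₀′,h₁′,h₂′)=(q₀+h₁−h₂, h₀+h₂−q₀, q₀+h₁−h₀) and (q₀′,q₁′,q₂′)=(h₁, q₀+q₁−h₂, q₀+q₂−h₀); if h₀<q₀<h₂, then (h₀′,h₁′,h₂′)=(h₁, h₀, h₁+h₂−h₀) and (q₀′,q₁′,q₂′)=(h₁+h₂−q₀, q₁, 2q₀+q₂+h₁−h₀); if h₂<q₀<h₀, then (h₀′,h₁′,h₂′)=(h₁+h₀−h₂, h₂, h₁) and (q₀′,q₁′,q₂′)=(h₁+h₀−q₀, 2q₀+q₁+h₁−h₂, q₂); in each case the qᵢ′ are reduced to their least nonnegative residues mod 2lᵢ′=h′_{i−1}+h′ᵢ.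 (These cases are exhaustive since q₀∉{0,h₀,h₂}.) Then f′ is an admissible 6-tuple. -/

import Mathlib

/-!
Common setup: 6-tuples, the coloured graph Γ(f), conditions (I)–(VI),
the maps ψ₁, ψ₂, ψ₃, σ, equivalences, traps, canonical/minimal/root tuples.
-/

namespace GMN

/-- A 6-tuple `(h₀,h₁,h₂;q₀,q₁,q₂)` of integers. -/
structure Tuple where
  h0 : ℤ
  h1 : ℤ
  h2 : ℤ
  q0 : ℤ
  q1 : ℤ
  q2 : ℤ

namespace Tuple

/-- The `h`-components indexed by `ℤ₃`. -/
def h (f : Tuple) : ZMod 3 → ℤ := fun i => if i = 0 then f.h0 else if i = 1 then f.h1 else f.h2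

/-- The `q`-components indexed by `ℤ₃`. -/
def q (f : Tuple) : ZMod 3 → ℤ := fun i => if i = 0 then f.q0 else if i = 1 then f.q1 else f.q2

/-- `2lᵢ = h_{i-1} + hᵢ`. -/
def twol (f : Tuple) (i : ZMod 3) : ℤ := f.h (i - 1) + f.h i

end Tuple

/-- Condition (I): all `hᵢ` positive. -/
def CondI (f : Tuple) : Prop := ∀ i, 0 < f.h i

/-- Condition (II): all `hᵢ` of the same parity. -/
def CondII (f : Tuple) : Prop := ∀ i j, f.h i % 2 = f.h j % 2

/-- Condition (III): `0 ≤ qᵢ < 2lᵢ`. -/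
def CondIII (f : Tuple) : Prop := ∀ i, 0 ≤ f.q i ∧ f.q i < f.twol i

/-- Condition (IV): all `qᵢ` of the same parity. -/
def CondIV (f : Tuple) : Prop := ∀ i j, f.q i % 2 = f.q j % 2

/-- Conditions (I)–(IV) together. -/
def CondsI_IV (f : Tuple) : Prop := CondI f ∧ CondII f ∧ CondIII f ∧ CondIV f

/-- Condition (V): `hᵢ + qᵢ` odd. -/
def CondV (f : Tuple) : Prop := ∀ i, (f.h i + f.q i) % 2 = 1

/-- The vertex set `V(f) = ⋃ᵢ {i} × ℤ_{2lᵢ}`, with second coordinates as least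
nonnegative residues. -/
def Vtx (f : Tuple) : Set (ZMod 3 × ℤ) := {p | 0 ≤ p.2 ∧ p.2 < f.twol p.1}

/-- `ι₀(i,j) = (i, j + (−1)^j)`, second coordinate mod `2lᵢ`. -/
def iota0 (f : Tuple) (p : ZMod 3 × ℤ) : ZMod 3 × ℤ :=
  (p.1, (if p.2 % 2 = 0 then p.2 + 1 else p.2 - 1) % f.twol p.1)

/-- `ι₁(i,j) = (i, j − (−1)^j)`, second coordinate mod `2lᵢ`. -/
def iota1 (f : Tuple) (p : ZMod 3 × ℤ) : ZMod 3 × ℤ :=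
  (p.1, (if p.2 % 2 = 0 then p.2 - 1 else p.2 + 1) % f.twol p.1)

/-- `ι₂(i,j) = (i+1, −j−1)` if `0 ≤ j ≤ hᵢ−1`, and `(i−1, 2lᵢ−j−1)` if `hᵢ ≤ j ≤ 2lᵢ−1`. -/
def iota2 (f : Tuple) (p : ZMod 3 × ℤ) : ZMod 3 × ℤ :=
  if p.2 < f.h p.1 then (p.1 + 1, (-p.2 - 1) % f.twol (p.1 + 1))
  else (p.1 - 1, (f.twol p.1 - p.2 - 1) % f.twol (p.1 - 1))

/-- `ρ(i,j) = (i, j + qᵢ)`. -/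
def rho (f : Tuple) (p : ZMod 3 × ℤ) : ZMod 3 × ℤ :=
  (p.1, (p.2 + f.q p.1) % f.twol p.1)

/-- `ρ⁻¹(i,j) = (i, j − qᵢ)`. -/
def rhoInv (f : Tuple) (p : ZMod 3 × ℤ) : ZMod 3 × ℤ :=
  (p.1, (p.2 - f.q p.1) % f.twol p.1)

/-- `ι₃ = ρ ∘ ι₂ ∘ ρ⁻¹`. -/
def iota3 (f : Tuple) : ZMod 3 × ℤ → ZMod 3 × ℤ :=
  rho f ∘ iota2 f ∘ rhoInv f

/-- The four involutions of `Γ(f)`, indexed by the colour `c ∈ {0,1,2,3}`. -/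
def iota (f : Tuple) : Fin 4 → ZMod 3 × ℤ → ZMod 3 × ℤ
  | 0 => iota0 f
  | 1 => iota1 f
  | 2 => iota2 f
  | 3 => iota3 f

/-- One step along an edge of `Γ(f)` whose colour lies in `S`, within `V(f)`. -/
def Step (f : Tuple) (S : Set (Fin 4)) (a b : ZMod 3 × ℤ) : Prop :=
  a ∈ Vtx f ∧ b ∈ Vtx f ∧ ∃ c ∈ S, b = iota f c a

/-- The orbit relation on `V(f)` of the subgroup generated by the involutions with
colours in `S` (the `S`-residue relation). -/
def OrbRel (f : Tuple) (S : Set (Fin 4)) : ZMod 3 × ℤ → ZMod 3 × ℤ → Prop :=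
  Relation.EqvGen (Step f S)

/-- The subgroup generated by the colours in `S` has exactly three orbits on `V(f)`. -/
def ThreeOrbits (f : Tuple) (S : Set (Fin 4)) : Prop :=
  ∃ a b c, a ∈ Vtx f ∧ b ∈ Vtx f ∧ c ∈ Vtx f ∧
    ¬ OrbRel f S a b ∧ ¬ OrbRel f S a c ∧ ¬ OrbRel f S b c ∧
    ∀ v ∈ Vtx f, OrbRel f S a v ∨ OrbRel f S b v ∨ OrbRel f S c v

/-- Admissibility: conditions (I)–(IV), (V), and (VI) (three `{2,3}`-residues). -/
def Admissible (f : Tuple) : Prop :=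
  CondsI_IV f ∧ CondV f ∧ ThreeOrbits f {2, 3}

/-- `ψ₁(h₀,h₁,h₂;q₀,q₁,q₂) = (h₁,h₂,h₀;q₁,q₂,q₀)`. -/
def psi1 (f : Tuple) : Tuple := ⟨f.h1, f.h2, f.h0, f.q1, f.q2, f.q0⟩

/-- `ψ₂(h₀,h₁,h₂;q₀,q₁,q₂) = (h₂,h₁,h₀;q₀,q₂,q₁)`. -/
def psi2 (f : Tuple) : Tuple := ⟨f.h2, f.h1, f.h0, f.q0, f.q2, f.q1⟩

/-- `ψ₃(h₀,h₁,h₂;q₀,q₁,q₂) = (h₀,h₁,h₂;−q₀,−q₁,−q₂)`, the `q`-entries reduced to their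
least nonnegative residues mod the respective `2lᵢ`. -/
def psi3 (f : Tuple) : Tuple :=
  ⟨f.h0, f.h1, f.h2,
    (-f.q0) % (f.h2 + f.h0), (-f.q1) % (f.h0 + f.h1), (-f.q2) % (f.h1 + f.h2)⟩

/-- The 2-symmetric transformation `σ`, with the `q′`-entries reduced to their least
nonnegative residues mod the respective `2lᵢ′ = h′_{i−1} + h′ᵢ`. -/
def sigma (f : Tuple) : Tuple :=
  if f.q0 = 0 then f
  else if f.q0 < f.h0 ∧ f.q0 < f.h2 then
    ⟨f.h0 + f.h1 - f.q0, f.q0, f.h2 + f.h1 - f.q0,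
      (f.h0 + f.h1 + f.h2 - 2 * f.q0) % ((f.h2 + f.h1 - f.q0) + (f.h0 + f.h1 - f.q0)),
      (f.q0 + f.q1 + f.h1) % ((f.h0 + f.h1 - f.q0) + f.q0),
      (f.q0 + f.q2 + f.h1) % (f.q0 + (f.h2 + f.h1 - f.q0))⟩
  else if f.h0 < f.q0 ∧ f.h2 < f.q0 then
    ⟨f.q0 + f.h1 - f.h2, f.h0 + f.h2 - f.q0, f.q0 + f.h1 - f.h0,
      f.h1 % ((f.q0 + f.h1 - f.h0) + (f.q0 + f.h1 - f.h2)),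
      (f.q0 + f.q1 - f.h2) % ((f.q0 + f.h1 - f.h2) + (f.h0 + f.h2 - f.q0)),
      (f.q0 + f.q2 - f.h0) % ((f.h0 + f.h2 - f.q0) + (f.q0 + f.h1 - f.h0))⟩
  else if f.q0 < f.h2 then
    ⟨f.h1, f.h0, f.h1 + f.h2 - f.h0,
      (f.h1 + f.h2 - f.q0) % ((f.h1 + f.h2 - f.h0) + f.h1),
      f.q1 % (f.h1 + f.h0),
      (2 * f.q0 + f.q2 + f.h1 - f.h0) % (f.h0 + (f.h1 + f.h2 - f.h0))⟩
  else
    ⟨f.h1 + f.h0 - f.h2, f.h2, f.h1,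
      (f.h1 + f.h0 - f.q0) % (f.h1 + (f.h1 + f.h0 - f.h2)),
      (2 * f.q0 + f.q1 + f.h1 - f.h2) % ((f.h1 + f.h0 - f.h2) + f.h2),
      f.q2 % (f.h2 + f.h1)⟩

/-- The complexity `ν(f) = h₀ + h₁ + h₂`. -/
def nu (f : Tuple) : ℤ := f.h0 + f.h1 + f.h2

/-- `δ(f) = ν(σ(f)) − ν(f)`. -/
def delta (f : Tuple) : ℤ := nu (sigma f) - nu f

/-- One step of the action of a generator of `H` on admissible 6-tuples. -/
def HStep (a b : Tuple) : Prop :=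
  Admissible a ∧ Admissible b ∧ (b = psi1 a ∨ b = psi2 a ∨ b = psi3 a)

/-- `H`-equivalence: the orbit relation of `H = ⟨ψ₁,ψ₂,ψ₃⟩` on `ℱ`. -/
def HEquiv : Tuple → Tuple → Prop := Relation.EqvGen HStep

/-- One step of the action of a generator of `H′` on admissible 6-tuples. -/
def H'Step (a b : Tuple) : Prop :=
  Admissible a ∧ Admissible b ∧ (b = psi2 a ∨ b = psi3 a)

/-- `H′`-equivalence: the orbit relation of `H′ = ⟨ψ₂,ψ₃⟩` on `ℱ`. -/
def H'Equiv : Tuple → Tuple → Prop := Relation.EqvGen H'Step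

/-- One step of the action of a generator of `G` on admissible 6-tuples. -/
def GStep (a b : Tuple) : Prop :=
  Admissible a ∧ Admissible b ∧ (b = psi1 a ∨ b = psi2 a ∨ b = psi3 a ∨ b = sigma a)

/-- `G`-equivalence: the orbit relation of `G = ⟨ψ₁,ψ₂,ψ₃,σ⟩` on `ℱ`. -/
def GEquiv : Tuple → Tuple → Prop := Relation.EqvGen GStep

/-- Membership in the set `{0, r+1, r+2, …, s−1}`. -/
def inT (r s x : ℤ) : Prop := x = 0 ∨ (r < x ∧ x < s)

/-- A trap of type `(r,s)`: `H`-equivalent to an admissible `(r,r,s;q₀,0,q₂)` with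
`q₀+k(q₀+q₂), q₂+k(q₀+q₂) ∈ {0,r+1,…,s−1} (mod r+s)` for all `k ≥ 0`. -/
def IsTrapOfType (r s : ℤ) (f : Tuple) : Prop :=
  ∃ g : Tuple, Admissible g ∧ HEquiv f g ∧
    g.h0 = r ∧ g.h1 = r ∧ g.h2 = s ∧ g.q1 = 0 ∧
    ∀ k : ℕ, inT r s ((g.q0 + (k : ℤ) * (g.q0 + g.q2)) % (r + s)) ∧
             inT r s ((g.q2 + (k : ℤ) * (g.q0 + g.q2)) % (r + s))

/-- A trap: a trap of some type `(r,s)` with `0 < r ≤ s`. -/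
def IsTrap (f : Tuple) : Prop := ∃ r s : ℤ, 0 < r ∧ r ≤ s ∧ IsTrapOfType r s f

/-- The canonical representative conditions (a)–(i) (together with admissibility). -/
def Canonical (f : Tuple) : Prop :=
  Admissible f ∧
  (f.h0 ≤ f.h1 ∧ f.h1 ≤ f.h2) ∧
  (2 * f.q0 ≤ f.h2 + f.h0) ∧
  ((f.q0 = 0 ∨ 2 * f.q0 = f.h2 + f.h0) → 2 * f.q1 ≤ f.h0 + f.h1) ∧
  ((f.q0 = 0 ∨ 2 * f.q0 = f.h2 + f.h0) → (f.q1 = 0 ∨ 2 * f.q1 = f.h0 + f.h1) →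
    2 * f.q2 ≤ f.h1 + f.h2) ∧
  (f.h0 = f.h1 → f.q0 ≤ f.q2 ∧ f.q2 ≤ (-f.q0) % (f.h2 + f.h0)) ∧
  (f.h0 = f.h1 → (f.q2 = f.q0 ∨ f.q2 = (-f.q0) % (f.h2 + f.h0)) → f.q1 ≤ f.h1) ∧
  (f.h1 = f.h2 → f.q0 ≤ f.q1 ∧ f.q1 ≤ (-f.q0) % (f.h2 + f.h0)) ∧
  (f.h1 = f.h2 → (f.q1 = f.q0 ∨ f.q1 = (-f.q0) % (f.h2 + f.h0)) → f.q2 ≤ f.h2) ∧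
  (f.h0 = f.h1 ∧ f.h1 = f.h2 → f.q1 ≤ f.q2)

/-- A canonical 6-tuple is minimal if its complexity is minimal in its `G`-orbit. -/
def Minimal (f : Tuple) : Prop :=
  Canonical f ∧ ∀ g, GEquiv f g → nu f ≤ nu g

/-- A canonical 6-tuple is a root if every `G`-equivalent but not `H`-equivalent
6-tuple has strictly larger complexity. -/
def Root (f : Tuple) : Prop :=
  Canonical f ∧ ∀ g, GEquiv f g → ¬ HEquiv f g → nu f < nu g

/-- A colour-preserving isomorphism between `Γ(f)` and `Γ(f′)`. -/
def CPIso (f f' : Tuple) : Prop :=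
  ∃ φ : ZMod 3 × ℤ → ZMod 3 × ℤ, Set.BijOn φ (Vtx f) (Vtx f') ∧
    ∀ c : Fin 4, ∀ v ∈ Vtx f, φ (iota f c v) = iota f' c (φ v)

/-- The set of admissible 6-tuples, as a type. -/
abbrev AdmTuple := {f : Tuple // Admissible f}

/-!
Let circle `i` be `{i} × ℤ_{2lᵢ}`. Deleting circle `0` joins the two neighbours of each of its
vertices, and the `{2,3}`-residues become curves made of parallel bands of edges on the circles
`1` and `2`. There are two bands of width `n = h₁` (edges of colour `2` and of colour `3` between
circles `1` and `2`), two bands of equal width `m` whose edges use colour `2` at one end and `3` at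
the other, and up to four bands, of widths `a, b, c, d`, returning to the circle they start from.
In these widths `h₀ = m + a + d`, `h₂ = m + b + c` and `q₀ = m + c + d`. Reversing circle `2` and
exchanging the colours `2` and `3` at its ends turns this band system into the one with
`m ↔ n`, `a ↔ d`, `b ↔ c`, which is that of `σ(f)`. So the residues of `f` map onto those of `σ(f)`;
as the exchange of widths is an involution, both have the same number of residues.
-/

section General

theorem forall_zmod_three {P : ZMod 3 → Prop} : (∀ i, P i) ↔ P 0 ∧ P 1 ∧ P 2 := by
  refine ⟨fun h => ⟨h 0, h 1, h 2⟩, fun ⟨h0, h1, h2⟩ i => ?_⟩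
  fin_cases i
  exacts [h0, h1, h2]

theorem enatCard_le_of_surjective {α β : Type*} {φ : α → β} (hφ : Function.Surjective φ) :
    ENat.card β ≤ ENat.card α :=
  ENat.card_le_card_of_injective (Function.injective_surjInv hφ)

variable {γ : Type*} {χ : ℤ → γ} {L : ℤ}

theorem periodic_map_eq_of_modEq (hχ : Function.Periodic χ L) {x y : ℤ} (h : x ≡ y [ZMOD L]) :
    χ x = χ y := by
  obtain ⟨k, hk⟩ := Int.modEq_iff_dvd.1 h
  rw [show x = y - k • L by rw [smul_eq_mul]; linarith, hχ.sub_zsmul_eq]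

theorem periodic_map_emod (hχ : Function.Periodic χ L) (x : ℤ) : χ (x % L) = χ x :=
  periodic_map_eq_of_modEq hχ (Int.mod_modEq x L)

end General

/-! ### Residues of a 6-tuple -/

theorem twol_pos {f : Tuple} (hI : CondI f) (i : ZMod 3) : 0 < f.twol i :=
  add_pos (hI _) (hI _)

/-- The edges of colours `2` and `3` of `Γ(f)`, each written once, on labels `(i, j)` whose second
coordinate is any integer representing a residue mod `2lᵢ`; `period` identifies the labels of a
vertex. -/
inductive Arc (f : Tuple) : ZMod 3 × ℤ → ZMod 3 × ℤ → Prop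
  | period (i : ZMod 3) (j : ℤ) : Arc f (i, j + f.twol i) (i, j)
  | two (i : ZMod 3) (j : ℤ) (h0 : 0 ≤ j) (h1 : j < f.h i) : Arc f (i, j) (i + 1, -j - 1)
  | three (i : ZMod 3) (j : ℤ) (h0 : 0 ≤ j) (h1 : j < f.h i) :
      Arc f (i, j + f.q i) (i + 1, -j - 1 + f.q (i + 1))

/-- The type of `{2,3}`-residues of `Γ(f)`. -/
abbrev Residue (f : Tuple) : Type := Quot (Arc f)

/-- The `{2,3}`-residue of the vertex of circle `i` with label `j`. -/
def residue (f : Tuple) (i : ZMod 3) (j : ℤ) : Residue f := Quot.mk _ (i, j)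

section Residue

variable {f : Tuple}

theorem residue_periodic (i : ZMod 3) : Function.Periodic (residue f i) (f.twol i) :=
  fun j => Quot.sound (.period i j)

theorem residue_eq_of_colour_two (i : ZMod 3) {j : ℤ} (h0 : 0 ≤ j) (h1 : j < f.h i) :
    residue f i j = residue f (i + 1) (-j - 1) :=
  Quot.sound (.two i j h0 h1)

theorem residue_eq_of_colour_three (i : ZMod 3) {j : ℤ} (h0 : 0 ≤ j) (h1 : j < f.h i) :
    residue f i (j + f.q i) = residue f (i + 1) (-j - 1 + f.q (i + 1)) :=
  Quot.sound (.three i j h0 h1)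

theorem exists_residue_lift {γ : Type*} {χ : ZMod 3 → ℤ → γ}
    (hperiod : ∀ i, Function.Periodic (χ i) (f.twol i))
    (htwo : ∀ i j, 0 ≤ j → j < f.h i → χ i j = χ (i + 1) (-j - 1))
    (hthree : ∀ i j, 0 ≤ j → j < f.h i → χ i (j + f.q i) = χ (i + 1) (-j - 1 + f.q (i + 1))) :
    ∃ F : Residue f → γ, ∀ i j, F (residue f i j) = χ i j := by
  have harc : ∀ p p', Arc f p p' → χ p.1 p.2 = χ p'.1 p'.2 := by
    rintro _ _ (⟨i, j⟩ | ⟨i, j, h0, h1⟩ | ⟨i, j, h0, h1⟩)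
    exacts [hperiod i j, htwo i j h0 h1, hthree i j h0 h1]
  exact ⟨Quot.lift (fun p => χ p.1 p.2) harc, fun _ _ => rfl⟩

theorem apply_iota2 {γ : Type*} {χ : ZMod 3 → ℤ → γ}
    (hper : ∀ i, Function.Periodic (χ i) (f.twol i))
    (harc : ∀ i j, 0 ≤ j → j < f.h i → χ i j = χ (i + 1) (-j - 1))
    {p : ZMod 3 × ℤ} (hp : p ∈ Vtx f) :
    χ (iota2 f p).1 (iota2 f p).2 = χ p.1 p.2 := by
  obtain ⟨i, j⟩ := p
  obtain ⟨h0, h1⟩ : 0 ≤ j ∧ j < f.twol i := hp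
  by_cases hj : j < f.h i
  · simp only [iota2, if_pos hj, periodic_map_emod (hper _)]
    exact (harc i j h0 hj).symm
  · have hj' : f.twol i - j - 1 < f.h (i - 1) := by simp only [Tuple.twol]; omega
    simp only [iota2, if_neg hj, periodic_map_emod (hper _)]
    rw [harc _ _ (by omega) hj', sub_add_cancel, ← hper i]
    congr 1
    ring

theorem residue_iota2 {p : ZMod 3 × ℤ} (hp : p ∈ Vtx f) :
    residue f (iota2 f p).1 (iota2 f p).2 = residue f p.1 p.2 :=
  apply_iota2 residue_periodic (fun i _ => residue_eq_of_colour_two i) hp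

/-- The vertex with a given integer label. -/
def vertex (f : Tuple) (i : ZMod 3) (j : ℤ) : ZMod 3 × ℤ := (i, j % f.twol i)

theorem vertex_periodic (i : ZMod 3) : Function.Periodic (vertex f i) (f.twol i) :=
  fun j => by simp [vertex]

theorem vertex_mem (hI : CondI f) (i : ZMod 3) (j : ℤ) : vertex f i j ∈ Vtx f :=
  ⟨Int.emod_nonneg _ (twol_pos hI _).ne', Int.emod_lt_of_pos _ (twol_pos hI _)⟩

theorem vertex_of_mem {p : ZMod 3 × ℤ} (hp : p ∈ Vtx f) : vertex f p.1 p.2 = p :=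
  Prod.ext rfl (Int.emod_eq_of_lt hp.1 hp.2)

theorem residue_vertex (i : ZMod 3) (j : ℤ) :
    residue f (vertex f i j).1 (vertex f i j).2 = residue f i j :=
  periodic_map_emod (residue_periodic i) j

theorem rho_vertex (i : ZMod 3) (j : ℤ) : rho f (vertex f i j) = vertex f i (j + f.q i) := by
  simp [rho, vertex]

theorem rhoInv_vertex (i : ZMod 3) (j : ℤ) :
    rhoInv f (vertex f i j) = vertex f i (j - f.q i) := by
  simp [rhoInv, vertex]

theorem residue_iota3 (hI : CondI f) {p : ZMod 3 × ℤ} (hp : p ∈ Vtx f) :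
    residue f (iota3 f p).1 (iota3 f p).2 = residue f p.1 p.2 := by
  have hmem : rhoInv f p ∈ Vtx f := by
    rw [← vertex_of_mem hp, rhoInv_vertex]
    exact vertex_mem hI _ _
  have hper (i : ZMod 3) : Function.Periodic (fun j => residue f i (j + f.q i)) (f.twol i) :=
    (residue_periodic i).add_const _
  calc residue f (iota3 f p).1 (iota3 f p).2
      = residue f (iota2 f (rhoInv f p)).1
          ((iota2 f (rhoInv f p)).2 + f.q (iota2 f (rhoInv f p)).1) :=
        periodic_map_emod (residue_periodic _) _
    _ = residue f p.1 ((p.2 - f.q p.1) % f.twol p.1 + f.q p.1) :=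
        apply_iota2 hper (fun i _ => residue_eq_of_colour_three i) hmem
    _ = residue f p.1 p.2 := by rw [periodic_map_emod (hper p.1), sub_add_cancel]

theorem iota2_vertex (hI : CondI f) {i : ZMod 3} {j : ℤ} (h0 : 0 ≤ j) (h1 : j < f.h i) :
    iota2 f (vertex f i j) = vertex f (i + 1) (-j - 1) := by
  have hmem : (i, j) ∈ Vtx f := ⟨h0, h1.trans_le (le_add_of_nonneg_left (hI _).le)⟩
  rw [vertex_of_mem hmem, iota2, if_pos h1, vertex]

theorem iota3_vertex (hI : CondI f) {i : ZMod 3} {j : ℤ} (h0 : 0 ≤ j) (h1 : j < f.h i) :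
    iota3 f (vertex f i (j + f.q i)) = vertex f (i + 1) (-j - 1 + f.q (i + 1)) := by
  rw [iota3, Function.comp, Function.comp, rhoInv_vertex, add_sub_cancel_right,
    iota2_vertex hI h0 h1, rho_vertex]

theorem orbRel_vertex_of_arc (hI : CondI f) {p p' : ZMod 3 × ℤ} (h : Arc f p p') :
    OrbRel f {2, 3} (vertex f p.1 p.2) (vertex f p'.1 p'.2) := by
  rcases h with ⟨i, j⟩ | ⟨i, j, h0, h1⟩ | ⟨i, j, h0, h1⟩
  · rw [vertex_periodic i j]
    exact .refl _
  · exact .rel _ _ ⟨vertex_mem hI _ _, vertex_mem hI _ _, 2, by simp, (iota2_vertex hI h0 h1).symm⟩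
  · exact .rel _ _ ⟨vertex_mem hI _ _, vertex_mem hI _ _, 3, by simp, (iota3_vertex hI h0 h1).symm⟩

theorem orbRel_iff_residue_eq (hI : CondI f) {p p' : ZMod 3 × ℤ} (hp : p ∈ Vtx f)
    (hp' : p' ∈ Vtx f) :
    OrbRel f {2, 3} p p' ↔ residue f p.1 p.2 = residue f p'.1 p'.2 := by
  constructor
  · have hstep : ∀ x y, Step f {2, 3} x y → residue f x.1 x.2 = residue f y.1 y.2 := by
      rintro x _ ⟨hx, -, _, rfl | rfl, rfl⟩
      exacts [(residue_iota2 hx).symm, (residue_iota3 hI hx).symm]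
    exact fun h => congrArg (Quot.lift (fun x => residue f x.1 x.2) hstep) (Quot.eqvGen_sound h)
  · intro h
    have harc : ∀ x y, Arc f x y →
        Quot.mk (Step f {2, 3}) (vertex f x.1 x.2) = Quot.mk _ (vertex f y.1 y.2) :=
      fun _ _ h => Quot.eqvGen_sound (orbRel_vertex_of_arc hI h)
    have horb : OrbRel f {2, 3} (vertex f p.1 p.2) (vertex f p'.1 p'.2) :=
      Quot.eqvGen_exact (congrArg (Quot.lift _ harc) h)
    rwa [vertex_of_mem hp, vertex_of_mem hp'] at horb

theorem exists_mem_residue_eq (hI : CondI f) (r : Residue f) :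
    ∃ p ∈ Vtx f, residue f p.1 p.2 = r := by
  induction r using Quot.ind with
  | mk p => exact ⟨vertex f p.1 p.2, vertex_mem hI _ _, residue_vertex _ _⟩

theorem threeOrbits_iff_card_residue (hI : CondI f) :
    ThreeOrbits f {2, 3} ↔ ENat.card (Residue f) = 3 := by
  rw [← Set.encard_univ, Set.encard_eq_three]
  constructor
  · rintro ⟨x, y, z, hx, hy, hz, hxy, hxz, hyz, hcover⟩
    rw [orbRel_iff_residue_eq hI ‹_› ‹_›] at hxy hxz hyz
    refine ⟨_, _, _, hxy, hxz, hyz, (Set.eq_univ_of_forall fun r => ?_).symm⟩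
    obtain ⟨v, hv, rfl⟩ := exists_mem_residue_eq hI r
    simpa only [orbRel_iff_residue_eq hI, hx, hy, hz, hv, Set.mem_insert_iff,
      Set.mem_singleton_iff, eq_comm] using hcover v hv
  · rintro ⟨r, s, t, hrs, hrt, hst, hcover⟩
    obtain ⟨x, hx, rfl⟩ := exists_mem_residue_eq hI r
    obtain ⟨y, hy, rfl⟩ := exists_mem_residue_eq hI s
    obtain ⟨z, hz, rfl⟩ := exists_mem_residue_eq hI t
    refine ⟨x, y, z, hx, hy, hz, ?_, ?_, ?_, fun v hv => ?_⟩
    · rwa [orbRel_iff_residue_eq hI hx hy]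
    · rwa [orbRel_iff_residue_eq hI hx hz]
    · rwa [orbRel_iff_residue_eq hI hy hz]
    · have := hcover ▸ Set.mem_univ (residue f v.1 v.2)
      simpa only [orbRel_iff_residue_eq hI, hx, hy, hz, hv, Set.mem_insert_iff,
        Set.mem_singleton_iff, eq_comm] using this

end Residue

/-! ### Reduction of the `q`-entries -/

/-- The 6-tuple with each `qᵢ` replaced by its least nonnegative residue mod `2lᵢ`. -/
def reduceQ (f : Tuple) : Tuple :=
  ⟨f.h0, f.h1, f.h2, f.q0 % (f.h2 + f.h0), f.q1 % (f.h0 + f.h1), f.q2 % (f.h1 + f.h2)⟩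

theorem reduceQ_q (f : Tuple) (i : ZMod 3) : (reduceQ f).q i = f.q i % f.twol i := by
  revert i
  exact forall_zmod_three.2 ⟨rfl, rfl, rfl⟩

theorem card_residue_le_of_modEq {f g : Tuple} (hh : f.h = g.h)
    (hq : ∀ i, f.q i ≡ g.q i [ZMOD f.twol i]) :
    ENat.card (Residue g) ≤ ENat.card (Residue f) := by
  have htwol : f.twol = g.twol := by
    funext i
    simp only [Tuple.twol, hh]
  have hq_residue (i : ZMod 3) (j : ℤ) : residue g i (j + f.q i) = residue g i (j + g.q i) :=
    periodic_map_eq_of_modEq (residue_periodic i) (htwol ▸ (hq i).add_left j)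
  obtain ⟨F, hF⟩ := exists_residue_lift (f := f) (χ := residue g) (htwol ▸ residue_periodic)
    (hh ▸ fun i _ => residue_eq_of_colour_two i) fun i j h0 h1 => by
      rw [hq_residue, hq_residue]
      exact residue_eq_of_colour_three i h0 (hh ▸ h1)
  exact enatCard_le_of_surjective (φ := F) (Quot.ind fun p => ⟨residue f p.1 p.2, hF p.1 p.2⟩)

theorem card_residue_reduceQ (f : Tuple) :
    ENat.card (Residue (reduceQ f)) = ENat.card (Residue f) := by
  have hq (i : ZMod 3) : (reduceQ f).q i ≡ f.q i [ZMOD f.twol i] :=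
    reduceQ_q f i ▸ Int.mod_modEq _ _
  exact le_antisymm (card_residue_le_of_modEq rfl fun i => (hq i).symm)
    (card_residue_le_of_modEq rfl hq)

theorem condIV_of_condII_condV {f : Tuple} (hII : CondII f) (hV : CondV f) : CondIV f := by
  intro i j
  have := hII i j
  have := hV i
  have := hV j
  omega

theorem admissible_reduceQ {f : Tuple} (hI : CondI f) (hII : CondII f) (hV : CondV f)
    (hcard : ENat.card (Residue f) = 3) : Admissible (reduceQ f) := by
  have hIII : CondIII (reduceQ f) := fun i => by
    rw [reduceQ_q]
    exact ⟨Int.emod_nonneg _ (twol_pos hI i).ne', Int.emod_lt_of_pos _ (twol_pos hI i)⟩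
  have hV' : CondV (reduceQ f) := fun i => by
    have htwol : 2 ∣ f.twol i := by
      have := hII (i - 1) i
      simp only [Tuple.twol]
      omega
    have hqi : (reduceQ f).q i % 2 = f.q i % 2 := by
      rw [reduceQ_q, Int.emod_emod_of_dvd _ htwol]
    rw [Int.add_emod, hqi, ← Int.add_emod]
    exact hV i
  exact ⟨⟨hI, hII, hIII, condIV_of_condII_condV hII hV'⟩, hV',
    (threeOrbits_iff_card_residue (f := reduceQ f) hI).2 ((card_residue_reduceQ f).trans hcard)⟩

theorem reduceQ_congr {h₀ h₁ h₂ q₀ q₁ q₂ h₀' h₁' h₂' q₀' q₁' q₂' : ℤ} (hh₀ : h₀ = h₀')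
    (hh₁ : h₁ = h₁') (hh₂ : h₂ = h₂') (hq₀ : q₀ ≡ q₀' [ZMOD h₂ + h₀])
    (hq₁ : q₁ ≡ q₁' [ZMOD h₀ + h₁]) (hq₂ : q₂ ≡ q₂' [ZMOD h₁ + h₂]) :
    reduceQ ⟨h₀, h₁, h₂, q₀, q₁, q₂⟩ = reduceQ ⟨h₀', h₁', h₂', q₀', q₁', q₂'⟩ := by
  subst hh₀ hh₁ hh₂
  simp only [reduceQ, hq₀.eq, hq₁.eq, hq₂.eq]

/-! ### Band coordinates -/

/-- The widths of the bands obtained by deleting circle `0`, together with `q₁` and `q₂`: `n` for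
the bands of colours `2` and `3` joining circles `1` and `2`, `m` for the bands joining an end of
colour `2` to one of colour `3` on the other circle, `a` and `d` for the bands from circle `1` to
itself, `b` and `c` for those from circle `2` to itself. In terms of the 6-tuple, `a` and `c` are
the positive and negative parts of `h₀ - q₀`, and `b` and `d` those of `h₂ - q₀`. On circle `0` the
edges of colour `2` belong to the bands `d, m, a, c, m, b` in this order, and those of colour `3`,
read from label `q₀` on, to `a, m, d, b, m, c`. -/
@[ext]
structure Bands where
  (m n a b c d q1 q2 : ℤ)
  m_pos : 0 < m
  n_pos : 0 < n
  a_nonneg : 0 ≤ a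
  b_nonneg : 0 ≤ b
  c_nonneg : 0 ≤ c
  d_nonneg : 0 ≤ d
  a_eq_zero_or_c_eq_zero : a = 0 ∨ c = 0
  b_eq_zero_or_d_eq_zero : b = 0 ∨ d = 0

namespace Bands

/-- The 6-tuple with given band widths. -/
def tuple (T : Bands) : Tuple :=
  ⟨T.m + T.a + T.d, T.n, T.m + T.b + T.c, T.m + T.c + T.d, T.q1, T.q2⟩

/-- The transformation `σ` in band coordinates, before reduction of the `q`-entries. -/
def swap (T : Bands) : Bands where
  m := T.n
  n := T.m
  a := T.d
  b := T.c
  c := T.b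
  d := T.a
  q1 := T.q1 - T.a + T.d
  q2 := T.q2 - T.b + T.c
  m_pos := T.n_pos
  n_pos := T.m_pos
  a_nonneg := T.d_nonneg
  b_nonneg := T.c_nonneg
  c_nonneg := T.b_nonneg
  d_nonneg := T.a_nonneg
  a_eq_zero_or_c_eq_zero := T.b_eq_zero_or_d_eq_zero.symm
  b_eq_zero_or_d_eq_zero := T.a_eq_zero_or_c_eq_zero.symm

theorem swap_swap (T : Bands) : T.swap.swap = T := by
  ext <;> simp [swap]

theorem exists_tuple_eq {f : Tuple} (hI : CondI f) (hpos : 0 < f.q0)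
    (hlt : f.q0 < f.h2 + f.h0) : ∃ T : Bands, T.tuple = f := by
  obtain ⟨h0, h1, h2⟩ : 0 < f.h0 ∧ 0 < f.h1 ∧ 0 < f.h2 := forall_zmod_three.1 hI
  let T : Bands :=
    { m := min (min f.h0 f.h2) (min f.q0 (f.h2 + f.h0 - f.q0))
      n := f.h1
      a := max (f.h0 - f.q0) 0
      b := max (f.h2 - f.q0) 0
      c := max (f.q0 - f.h0) 0
      d := max (f.q0 - f.h2) 0
      q1 := f.q1
      q2 := f.q2
      m_pos := by omega
      n_pos := h1
      a_nonneg := le_max_right _ _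
      b_nonneg := le_max_right _ _
      c_nonneg := le_max_right _ _
      d_nonneg := le_max_right _ _
      a_eq_zero_or_c_eq_zero := by omega
      b_eq_zero_or_d_eq_zero := by omega }
  have e0 : T.m + T.a + T.d = f.h0 := by simp only [T]; omega
  have e2 : T.m + T.b + T.c = f.h2 := by simp only [T]; omega
  have eq0 : T.m + T.c + T.d = f.q0 := by simp only [T]; omega
  exact ⟨T, by rw [tuple, e0, e2, eq0]⟩

variable {T : Bands}

theorem bounds (T : Bands) : 0 < T.m ∧ 0 < T.n ∧ 0 ≤ T.a ∧ 0 ≤ T.b ∧ 0 ≤ T.c ∧ 0 ≤ T.d ∧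
    (T.a = 0 ∨ T.c = 0) ∧ (T.b = 0 ∨ T.d = 0) :=
  ⟨T.m_pos, T.n_pos, T.a_nonneg, T.b_nonneg, T.c_nonneg, T.d_nonneg,
    T.a_eq_zero_or_c_eq_zero, T.b_eq_zero_or_d_eq_zero⟩

theorem condI_tuple (T : Bands) : CondI T.tuple := by
  have := T.bounds
  exact forall_zmod_three.2 ⟨show 0 < T.m + T.a + T.d by omega, T.n_pos,
    show 0 < T.m + T.b + T.c by omega⟩

theorem condII_tuple_iff : CondII T.tuple ↔
    (T.m + T.a + T.d) % 2 = T.n % 2 ∧ (T.m + T.b + T.c) % 2 = T.n % 2 := by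
  refine ⟨fun h => ⟨h 0 1, h 2 1⟩, fun ⟨h0, h2⟩ => ?_⟩
  have h (i : ZMod 3) : T.tuple.h i % 2 = T.n % 2 := by
    revert i
    exact forall_zmod_three.2 ⟨h0, rfl, h2⟩
  exact fun i j => (h i).trans (h j).symm

theorem condV_tuple_iff : CondV T.tuple ↔
    (T.m + T.a + T.d + (T.m + T.c + T.d)) % 2 = 1 ∧ (T.n + T.q1) % 2 = 1 ∧
      (T.m + T.b + T.c + T.q2) % 2 = 1 :=
  forall_zmod_three

theorem condII_swap (hII : CondII T.tuple) : CondII T.swap.tuple := by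
  rw [condII_tuple_iff] at *
  simp only [swap]
  omega

theorem condV_swap (hII : CondII T.tuple) (hV : CondV T.tuple) : CondV T.swap.tuple := by
  rw [condII_tuple_iff] at hII
  rw [condV_tuple_iff] at *
  simp only [swap]
  omega

-- As `b - d = h₂ - q₀`, this is `q₀ ≠ h₂`, which the definition of `sigma` presupposes.
theorem b_ne_d (hII : CondII T.tuple) (hV : CondV T.tuple) : T.b ≠ T.d := by
  rw [condII_tuple_iff] at hII
  rw [condV_tuple_iff] at hV
  omega

theorem sigma_tuple (hne : T.b ≠ T.d) : sigma T.tuple = reduceQ T.swap.tuple := by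
  obtain ⟨m, n, a, b, c, d, q1, q2, hm, hn, ha, hb, hc, hd, hac, hbd⟩ := T
  rw [sigma]
  split_ifs with hq hlt hgt hbetween <;> simp only [tuple, swap] at *
  · omega
  · exact reduceQ_congr (by omega) (by omega) (by omega) (Int.modEq_iff_dvd.2 ⟨0, by omega⟩)
      (Int.modEq_iff_dvd.2 ⟨-1, by omega⟩) (Int.modEq_iff_dvd.2 ⟨-1, by omega⟩)
  · exact reduceQ_congr (by omega) (by omega) (by omega) (Int.modEq_iff_dvd.2 ⟨0, by omega⟩)
      (Int.modEq_iff_dvd.2 ⟨0, by omega⟩) (Int.modEq_iff_dvd.2 ⟨0, by omega⟩)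
  · exact reduceQ_congr (by omega) (by omega) (by omega) (Int.modEq_iff_dvd.2 ⟨0, by omega⟩)
      (Int.modEq_iff_dvd.2 ⟨0, by omega⟩) (Int.modEq_iff_dvd.2 ⟨-1, by omega⟩)
  · exact reduceQ_congr (by omega) (by omega) (by omega) (Int.modEq_iff_dvd.2 ⟨0, by omega⟩)
      (Int.modEq_iff_dvd.2 ⟨-1, by omega⟩) (Int.modEq_iff_dvd.2 ⟨0, by omega⟩)

/-- A pair of functions `φ`, `ψ` on the integer labels of circles `1` and `2` that takes equal
values at the two ends of each edge of a band. A field is named after the width of its band and the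
colours of the left and the right end. -/
structure RespectsBands {γ : Type*} (T : Bands) (φ ψ : ℤ → γ) : Prop where
  periodic_one : Function.Periodic φ (T.m + T.a + T.d + T.n)
  periodic_two : Function.Periodic ψ (T.n + (T.m + T.b + T.c))
  n_two_two {j : ℤ} : 0 ≤ j → j < T.n → φ j = ψ (-j - 1)
  n_three_three {j : ℤ} : 0 ≤ j → j < T.n → φ (j + T.q1) = ψ (-j - 1 + T.q2)
  m_two_three {j : ℤ} : 0 ≤ j → j < T.m → φ (-T.d - j - 1) = ψ (T.q2 + T.m + T.c - j - 1)
  m_three_two {j : ℤ} : 0 ≤ j → j < T.m → φ (T.q1 - T.a - j - 1) = ψ (T.m + T.b - j - 1)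
  a_three_two {j : ℤ} : 0 ≤ j → j < T.a → φ (T.q1 - j - 1) = φ (-T.d - T.m - j - 1)
  d_three_two {j : ℤ} : 0 ≤ j → j < T.d → φ (T.q1 - T.m - T.a - j - 1) = φ (-j - 1)
  b_two_three {j : ℤ} : 0 ≤ j → j < T.b → ψ j = ψ (T.q2 + T.m + T.c + j)
  c_two_three {j : ℤ} : 0 ≤ j → j < T.c → ψ (T.m + T.b + j) = ψ (T.q2 + j)

section Residue

variable {x u v : ℤ}

theorem residue_zero_eq_one_of_colour_two (h0 : 0 ≤ x) (h1 : x < T.m + T.a + T.d)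
    (h : x + u = -1) : residue T.tuple 0 x = residue T.tuple 1 u := by
  obtain rfl : u = -x - 1 := by omega
  exact residue_eq_of_colour_two (f := T.tuple) 0 h0 h1

theorem residue_zero_eq_one_of_colour_three (h0 : T.m + T.c + T.d ≤ x)
    (h1 : x < 2 * T.m + T.a + T.c + 2 * T.d) (h : x + u = T.m + T.c + T.d + T.q1 - 1) :
    residue T.tuple 0 x = residue T.tuple 1 u := by
  obtain ⟨y, rfl⟩ : ∃ y, x = y + (T.m + T.c + T.d) := ⟨x - (T.m + T.c + T.d), by omega⟩
  obtain rfl : u = -y - 1 + T.q1 := by omega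
  exact residue_eq_of_colour_three (f := T.tuple) 0 (show 0 ≤ y by omega)
    (show y < T.m + T.a + T.d by omega)

theorem residue_zero_eq_two_of_colour_two (h0 : 0 ≤ v) (h1 : v < T.m + T.b + T.c)
    (h : x + v = -1) : residue T.tuple 0 x = residue T.tuple 2 v := by
  obtain rfl : x = -v - 1 := by omega
  exact (residue_eq_of_colour_two (f := T.tuple) 2 h0 h1).symm

theorem residue_zero_eq_two_of_colour_three (h0 : T.q2 ≤ v) (h1 : v < T.m + T.b + T.c + T.q2)
    (h : x + v = T.m + T.c + T.d + T.q2 - 1) : residue T.tuple 0 x = residue T.tuple 2 v := by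
  obtain ⟨y, rfl⟩ : ∃ y, v = y + T.q2 := ⟨v - T.q2, by omega⟩
  obtain rfl : x = -y - 1 + (T.m + T.c + T.d) := by omega
  exact (residue_eq_of_colour_three (f := T.tuple) 2 (show 0 ≤ y by omega)
    (show y < T.m + T.b + T.c by omega)).symm

theorem residue_zero_periodic :
    Function.Periodic (residue T.tuple 0) (T.m + T.b + T.c + (T.m + T.a + T.d)) :=
  residue_periodic (f := T.tuple) 0

theorem respectsBands_residue (T : Bands) :
    T.RespectsBands (residue T.tuple 1) (residue T.tuple 2) := by
  have := T.bounds
  exact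
    { periodic_one := residue_periodic (f := T.tuple) 1
      periodic_two := residue_periodic (f := T.tuple) 2
      n_two_two := residue_eq_of_colour_two (f := T.tuple) 1
      n_three_three := residue_eq_of_colour_three (f := T.tuple) 1
      m_two_three := fun {j} h0 h1 => by
        trans residue T.tuple 0 (T.d + j)
        · exact (residue_zero_eq_one_of_colour_two (by omega) (by omega) (by omega)).symm
        · exact residue_zero_eq_two_of_colour_three (by omega) (by omega) (by omega)
      m_three_two := fun {j} h0 h1 => by
        trans residue T.tuple 0 (-T.m - T.b + j)
        · rw [← residue_zero_periodic (-T.m - T.b + j)]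
          exact (residue_zero_eq_one_of_colour_three (by omega) (by omega) (by omega)).symm
        · exact residue_zero_eq_two_of_colour_two (by omega) (by omega) (by omega)
      a_three_two := fun {j} h0 h1 => by
        trans residue T.tuple 0 (T.d + T.m + j)
        · exact (residue_zero_eq_one_of_colour_three (by omega) (by omega) (by omega)).symm
        · exact residue_zero_eq_one_of_colour_two (by omega) (by omega) (by omega)
      d_three_two := fun {j} h0 h1 => by
        trans residue T.tuple 0 j
        · rw [← residue_zero_periodic j]
          exact (residue_zero_eq_one_of_colour_three (by omega) (by omega) (by omega)).symm
        · exact residue_zero_eq_one_of_colour_two (by omega) (by omega) (by omega)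
      b_two_three := fun {j} h0 h1 => by
        trans residue T.tuple 0 (-j - 1)
        · exact (residue_zero_eq_two_of_colour_two (by omega) (by omega) (by omega)).symm
        · exact residue_zero_eq_two_of_colour_three (by omega) (by omega) (by omega)
      c_two_three := fun {j} h0 h1 => by
        trans residue T.tuple 0 (-T.m - T.b - j - 1)
        · exact (residue_zero_eq_two_of_colour_two (by omega) (by omega) (by omega)).symm
        · rw [← residue_zero_periodic]
          exact residue_zero_eq_two_of_colour_three (by omega) (by omega) (by omega) }

end Residue

section Swap

variable {γ : Type*} {φ ψ : ℤ → γ}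

-- The shifts carry the `n`-bands of `T` to the `m`-bands of `T.swap` and vice versa.
theorem RespectsBands.of_swap (h : T.swap.RespectsBands φ ψ) :
    T.RespectsBands (fun u => φ (u - T.n - T.a)) (fun v => ψ (T.q2 + T.c - 1 - v)) := by
  obtain ⟨hφ, hψ, n_two_two, n_three_three, m_two_three, m_three_two, a_three_two, d_three_two,
    b_two_three, c_two_three⟩ := h
  simp only [swap] at *
  exact
    { periodic_one := fun u => by
        convert hφ (u - T.n - T.a) using 2
        ring
      periodic_two := fun v => by
        beta_reduce
        rw [← hψ]
        congr 1
        ring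
      n_two_two := fun {j} h0 h1 => by
        convert m_two_three (j := T.n - 1 - j) (by omega) (by omega) using 2 <;> ring
      n_three_three := fun {j} h0 h1 => by
        convert m_three_two (j := T.n - 1 - j) (by omega) (by omega) using 2 <;> ring
      m_two_three := fun {j} h0 h1 => by
        rw [← hφ]
        convert n_two_two (j := T.m - 1 - j) (by omega) (by omega) using 2 <;> ring
      m_three_two := fun {j} h0 h1 => by
        rw [← hφ]
        convert n_three_three (j := T.m - 1 - j) (by omega) (by omega) using 2 <;> ring
      a_three_two := fun {j} h0 h1 => by
        rw [← hφ (-T.d - T.m - j - 1 - T.n - T.a)]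
        convert d_three_two h0 h1 using 2 <;> ring
      d_three_two := fun {j} h0 h1 => by
        rw [← hφ (T.q1 - T.m - T.a - j - 1 - T.n - T.a)]
        convert a_three_two h0 h1 using 2 <;> ring
      b_two_three := fun {j} h0 h1 => by
        rw [← hψ (T.q2 + T.c - 1 - (T.q2 + T.m + T.c + j))]
        convert (c_two_three (j := T.b - 1 - j) (by omega) (by omega)).symm using 2 <;> ring
      c_two_three := fun {j} h0 h1 => by
        rw [← hψ]
        convert (b_two_three (j := T.c - 1 - j) (by omega) (by omega)).symm using 2 <;> ring }

end Swap

/-- The labelling of circle `0` that agrees with `φ` and `ψ` along the edges of colour `2`. -/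
def circleZero (T : Bands) {γ : Type*} (φ ψ : ℤ → γ) (x : ℤ) : γ :=
  let r := x % (T.m + T.b + T.c + (T.m + T.a + T.d))
  if r < T.m + T.a + T.d then φ (-r - 1) else ψ (T.m + T.b + T.c + (T.m + T.a + T.d) - r - 1)

section CircleZero

variable {γ : Type*} {φ ψ : ℤ → γ}

theorem circleZero_periodic :
    Function.Periodic (T.circleZero φ ψ) (T.m + T.b + T.c + (T.m + T.a + T.d)) := fun x => by
  simp only [circleZero, Int.add_emod_right]

theorem circleZero_eq_one {x u : ℤ} (h0 : 0 ≤ x) (h1 : x < T.m + T.a + T.d) (h : x + u = -1) :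
    T.circleZero φ ψ x = φ u := by
  have := T.bounds
  rw [circleZero, Int.emod_eq_of_lt h0 (by omega), if_pos h1]
  congr 1
  omega

theorem circleZero_eq_two {x v : ℤ} (h0 : 0 ≤ v) (h1 : v < T.m + T.b + T.c) (h : x + v = -1) :
    T.circleZero φ ψ x = ψ v := by
  have := T.bounds
  rw [← circleZero_periodic, circleZero, Int.emod_eq_of_lt (by omega) (by omega),
    if_neg (by omega)]
  congr 1
  omega

theorem RespectsBands.circleZero_eq_one_of_colour_three (h : T.RespectsBands φ ψ) {y : ℤ}
    (h0 : 0 ≤ y) (h1 : y < T.m + T.a + T.d) :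
    T.circleZero φ ψ (y + (T.m + T.c + T.d)) = φ (-y - 1 + T.q1) := by
  have := T.bounds
  obtain hy | hy | hy : y < T.a ∨ (T.a ≤ y ∧ y < T.a + T.m) ∨ T.a + T.m ≤ y := by omega
  · calc T.circleZero φ ψ (y + (T.m + T.c + T.d))
        = φ (-T.d - T.m - y - 1) := circleZero_eq_one (by omega) (by omega) (by omega)
      _ = φ (T.q1 - y - 1) := (h.a_three_two h0 hy).symm
      _ = φ (-y - 1 + T.q1) := by ring_nf
  · calc T.circleZero φ ψ (y + (T.m + T.c + T.d))
        = ψ (T.m + T.b - (y - T.a) - 1) := by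
          rw [← circleZero_periodic.sub_eq]
          exact circleZero_eq_two (by omega) (by omega) (by omega)
      _ = φ (T.q1 - T.a - (y - T.a) - 1) := (h.m_three_two (by omega) (by omega)).symm
      _ = φ (-y - 1 + T.q1) := by ring_nf
  · calc T.circleZero φ ψ (y + (T.m + T.c + T.d))
        = φ (-(y - T.m - T.a) - 1) := by
          rw [← circleZero_periodic.sub_eq]
          exact circleZero_eq_one (by omega) (by omega) (by omega)
      _ = φ (T.q1 - T.m - T.a - (y - T.m - T.a) - 1) :=
          (h.d_three_two (by omega) (by omega)).symm
      _ = φ (-y - 1 + T.q1) := by ring_nf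

theorem RespectsBands.circleZero_eq_two_of_colour_three (h : T.RespectsBands φ ψ) {v : ℤ}
    (h0 : 0 ≤ v) (h1 : v < T.m + T.b + T.c) :
    T.circleZero φ ψ (-v - 1 + (T.m + T.c + T.d)) = ψ (v + T.q2) := by
  have := T.bounds
  obtain hv | hv | hv : v < T.c ∨ (T.c ≤ v ∧ v < T.c + T.m) ∨ T.c + T.m ≤ v := by omega
  · calc T.circleZero φ ψ (-v - 1 + (T.m + T.c + T.d))
        = ψ (T.m + T.b + v) := by
          rw [← circleZero_periodic.sub_eq]
          exact circleZero_eq_two (by omega) (by omega) (by omega)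
      _ = ψ (T.q2 + v) := h.c_two_three h0 hv
      _ = ψ (v + T.q2) := by rw [add_comm]
  · calc T.circleZero φ ψ (-v - 1 + (T.m + T.c + T.d))
        = φ (-T.d - (T.m + T.c - 1 - v) - 1) :=
          circleZero_eq_one (by omega) (by omega) (by omega)
      _ = ψ (T.q2 + T.m + T.c - (T.m + T.c - 1 - v) - 1) :=
          h.m_two_three (by omega) (by omega)
      _ = ψ (v + T.q2) := by ring_nf
  · calc T.circleZero φ ψ (-v - 1 + (T.m + T.c + T.d))
        = ψ (v - T.m - T.c) := circleZero_eq_two (by omega) (by omega) (by omega)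
      _ = ψ (T.q2 + T.m + T.c + (v - T.m - T.c)) := h.b_two_three (by omega) (by omega)
      _ = ψ (v + T.q2) := by ring_nf

theorem RespectsBands.exists_residue_lift (h : T.RespectsBands φ ψ) :
    ∃ F : Residue T.tuple → γ,
      (∀ u, F (residue T.tuple 1 u) = φ u) ∧ ∀ v, F (residue T.tuple 2 v) = ψ v := by
  let χ : ZMod 3 → ℤ → γ := ![T.circleZero φ ψ, φ, ψ]
  obtain ⟨F, hF⟩ := GMN.exists_residue_lift (f := T.tuple) (χ := χ)
    (forall_zmod_three.2 ⟨circleZero_periodic, h.periodic_one, h.periodic_two⟩)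
    (forall_zmod_three.2 ⟨fun j h0 h1 => circleZero_eq_one h0 h1 (by omega), fun j => h.n_two_two,
      fun j h0 h1 => (circleZero_eq_two h0 h1 (by omega)).symm⟩)
    (forall_zmod_three.2 ⟨fun j => h.circleZero_eq_one_of_colour_three, fun j => h.n_three_three,
      fun j h0 h1 => (h.circleZero_eq_two_of_colour_three h0 h1).symm⟩)
  exact ⟨F, hF 1, hF 2⟩

end CircleZero

theorem exists_residue_one_or_two_eq (T : Bands) (r : Residue T.tuple) :
    (∃ u, residue T.tuple 1 u = r) ∨ ∃ v, residue T.tuple 2 v = r := by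
  obtain ⟨⟨i, x⟩, ⟨h0, h1⟩, rfl⟩ := exists_mem_residue_eq T.condI_tuple r
  revert i
  refine forall_zmod_three.2 ⟨fun h0 h1 => ?_, fun _ _ => .inl ⟨x, rfl⟩, fun _ _ => .inr ⟨x, rfl⟩⟩
  change 0 ≤ x at h0
  change x < T.m + T.b + T.c + (T.m + T.a + T.d) at h1
  by_cases hx : x < T.m + T.a + T.d
  · exact .inl ⟨-x - 1, (residue_zero_eq_one_of_colour_two h0 hx (by omega)).symm⟩
  · refine .inr ⟨T.m + T.b + T.c + (T.m + T.a + T.d) - x - 1, ?_⟩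
    rw [← residue_zero_periodic.sub_eq x]
    exact (residue_zero_eq_two_of_colour_two (by omega) (by omega) (by omega)).symm

theorem card_residue_swap_le (T : Bands) :
    ENat.card (Residue T.swap.tuple) ≤ ENat.card (Residue T.tuple) := by
  obtain ⟨F, hF1, hF2⟩ := T.swap.respectsBands_residue.of_swap.exists_residue_lift
  refine enatCard_le_of_surjective (φ := F) fun r => ?_
  obtain ⟨u, rfl⟩ | ⟨v, rfl⟩ := T.swap.exists_residue_one_or_two_eq r
  · exact ⟨residue T.tuple 1 (u + T.n + T.a), by rw [hF1]; ring_nf⟩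
  · exact ⟨residue T.tuple 2 (T.q2 + T.c - 1 - v), by rw [hF2]; ring_nf⟩

theorem card_residue_swap (T : Bands) :
    ENat.card (Residue T.swap.tuple) = ENat.card (Residue T.tuple) :=
  T.card_residue_swap_le.antisymm (by simpa only [swap_swap] using T.swap.card_residue_swap_le)

end Bands

/-- if `f` is admissible with `q₀ ≠ 0`, then the 6-tuple `f′ = σ(f)`
obtained by the 2-symmetric transformation is admissible. -/
theorem stmt_6 (f : Tuple) (hf : Admissible f) (hq0 : f.q0 ≠ 0) :
    Admissible (sigma f) := by
  obtain ⟨⟨hI, hII, hIII, -⟩, hV, hVI⟩ := hf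
  obtain ⟨hq0_nonneg, hq0_lt⟩ : 0 ≤ f.q0 ∧ f.q0 < f.h2 + f.h0 := hIII 0
  obtain ⟨T, rfl⟩ := Bands.exists_tuple_eq hI (hq0_nonneg.lt_of_ne' hq0) hq0_lt
  rw [Bands.sigma_tuple (Bands.b_ne_d hII hV)]
  apply admissible_reduceQ T.swap.condI_tuple (Bands.condII_swap hII) (Bands.condV_swap hII hV)
  rw [T.card_residue_swap, ← threeOrbits_iff_card_residue hI]
  exact hVI

end GMN
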